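/- Let n ≥ 1 and 1 ≤ γ ≤ ⌊n/2⌋, and let G be a minimizer graph of 𝔾_{n,γ}, i.e., a connected simple graph on n vertices with domination number γ whose spectral radius is minimum among all such graphs. Then G is a tree. -/

import Mathlib

/-!
Perron–Frobenius, read off the Rayleigh quotient, shows that deleting edges from a graph while
keeping it connected strictly decreases the spectral radius. A minimizer therefore equals each of
its spanning trees with the same domination number, and such a tree exists: join every vertex
outside a minimum dominating set to one of its neighbours in the set. The edges chosen form a
star forest, any spanning tree containing this forest is dominated by the same set, and deleting
edges never decreases the domination number.
-/

open SimpleGraph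

/-- Adjacency matrix of a simple graph over ℝ. -/
noncomputable def adjMat {V : Type*} (G : SimpleGraph V) : Matrix V V ℝ :=
  Matrix.of fun i j => @ite ℝ (G.Adj i j) (Classical.propDecidable _) 1 0

/-- Spectral radius: the largest eigenvalue (supremum of the real spectrum)
of the adjacency matrix. -/
noncomputable def specRad {V : Type*} [Fintype V] [DecidableEq V]
    (G : SimpleGraph V) : ℝ :=
  sSup (spectrum ℝ (adjMat G))

/-- `D` is a dominating set of `G`. -/
def IsDomSet {V : Type*} (G : SimpleGraph V) (D : Finset V) : Prop :=
  ∀ v ∉ D, ∃ u ∈ D, G.Adj u v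

/-- The domination number of `G`. -/
noncomputable def domNum {V : Type*} [Fintype V] (G : SimpleGraph V) : ℕ :=
  sInf {k | ∃ D : Finset V, IsDomSet G D ∧ D.card = k}

section Matrix

open Matrix

variable {n R : Type*} [Fintype n]

theorem dotProduct_mulVec_le_abs [CommRing R] [LinearOrder R] [IsStrictOrderedRing R]
    {A : Matrix n n R} (hA : ∀ i j, 0 ≤ A i j) (x : n → R) : x ⬝ᵥ A *ᵥ x ≤ |x| ⬝ᵥ A *ᵥ |x| := by
  simp only [dotProduct, mulVec, Finset.mul_sum]
  refine Finset.sum_le_sum fun i _ ↦ Finset.sum_le_sum fun j _ ↦ ?_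
  calc x i * (A i j * x j) = A i j * (x i * x j) := mul_left_comm ..
    _ ≤ A i j * |x i * x j| := by gcongr; exacts [hA i j, le_abs_self _]
    _ = |x| i * (A i j * |x| j) := by rw [abs_mul, mul_left_comm, Pi.abs_apply, Pi.abs_apply]

theorem dotProduct_mulVec_lt_of_le_of_ne [Ring R] [PartialOrder R] [IsStrictOrderedRing R]
    {A B : Matrix n n R} (hle : ∀ i j, A i j ≤ B i j) (hne : A ≠ B) {x : n → R}
    (hx : ∀ i, 0 < x i) : x ⬝ᵥ A *ᵥ x < x ⬝ᵥ B *ᵥ x := by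
  obtain ⟨u, v, huv⟩ : ∃ u v, A u v ≠ B u v := by
    contrapose! hne
    exact Matrix.ext hne
  have hrow (i) : (A *ᵥ x) i ≤ (B *ᵥ x) i :=
    Finset.sum_le_sum fun j _ ↦ mul_le_mul_of_nonneg_right (hle i j) (hx j).le
  have hrow_lt : (A *ᵥ x) u < (B *ᵥ x) u :=
    Finset.sum_lt_sum (fun j _ ↦ mul_le_mul_of_nonneg_right (hle u j) (hx j).le)
      ⟨v, Finset.mem_univ v, mul_lt_mul_of_pos_right ((hle u v).lt_of_ne huv) (hx v)⟩
  exact Finset.sum_lt_sum (fun i _ ↦ mul_le_mul_of_nonneg_left (hrow i) (hx i).le)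
    ⟨u, Finset.mem_univ u, mul_lt_mul_of_pos_left hrow_lt (hx u)⟩

theorem pow_mulVec_eq_pow_smul [DecidableEq n] [CommSemiring R] {A : Matrix n n R} {x : n → R}
    {r : R} (h : A *ᵥ x = r • x) (k : ℕ) : (A ^ k) *ᵥ x = r ^ k • x := by
  induction k with
  | zero => simp
  | succ k ih => rw [pow_succ, ← mulVec_mulVec, h, mulVec_smul, ih, smul_smul, pow_succ']

theorem pos_of_isIrreducible_of_mulVec_eq_smul [CommRing R] [LinearOrder R]
    [IsStrictOrderedRing R] {A : Matrix n n R} (hA : A.IsIrreducible) {x : n → R} {r : R}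
    (hx : 0 ≤ x) (hx0 : x ≠ 0) (h : A *ᵥ x = r • x) (i : n) : 0 < x i := by
  classical
  obtain ⟨j, hj⟩ := Function.ne_iff.1 hx0
  obtain ⟨k, -, hk⟩ := (isIrreducible_iff_exists_pow_pos hA.nonneg).1 hA i j
  have hpos : 0 < ((A ^ k) *ᵥ x) i :=
    Finset.sum_pos' (fun l _ ↦ mul_nonneg (pow_apply_nonneg hA.nonneg k i l) (hx l))
      ⟨j, Finset.mem_univ j, mul_pos hk ((hx j).lt_of_ne' hj)⟩
  rw [pow_mulVec_eq_pow_smul h] at hpos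
  refine (hx i).lt_of_ne' fun hi ↦ hpos.ne' ?_
  rw [Pi.smul_apply, hi, Pi.zero_apply, smul_zero]

variable [DecidableEq n]

theorem algebraMap_sub_mulVec [CommRing R] (r : R) (A : Matrix n n R) (x : n → R) :
    (algebraMap R (Matrix n n R) r - A) *ᵥ x = r • x - A *ᵥ x := by
  rw [sub_mulVec, Algebra.algebraMap_eq_smul_one, smul_mulVec, one_mulVec]

variable {A B : Matrix n n ℝ}

theorem posSemidef_sSup_spectrum_sub (hA : A.IsHermitian) :
    (algebraMap ℝ (Matrix n n ℝ) (sSup (spectrum ℝ A)) - A).PosSemidef := by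
  refine posSemidef_iff_isHermitian_and_spectrum_nonneg.2 ⟨.sub ?_ hA, ?_⟩
  · rw [algebraMap_eq_diagonal]
    exact isHermitian_diagonal _
  · rw [← spectrum.singleton_sub_eq, Set.singleton_sub]
    rintro _ ⟨μ, hμ, rfl⟩
    exact sub_nonneg.2 (le_csSup finite_real_spectrum.bddAbove hμ)

theorem dotProduct_mulVec_le_sSup_spectrum_mul (hA : A.IsHermitian) (x : n → ℝ) :
    x ⬝ᵥ A *ᵥ x ≤ sSup (spectrum ℝ A) * (x ⬝ᵥ x) := by
  have h := (posSemidef_sSup_spectrum_sub hA).dotProduct_mulVec_nonneg x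
  rwa [star_trivial, algebraMap_sub_mulVec, dotProduct_sub, dotProduct_smul, smul_eq_mul,
    sub_nonneg] at h

theorem mulVec_eq_sSup_spectrum_smul_iff (hA : A.IsHermitian) (x : n → ℝ) :
    A *ᵥ x = sSup (spectrum ℝ A) • x ↔ x ⬝ᵥ A *ᵥ x = sSup (spectrum ℝ A) * (x ⬝ᵥ x) := by
  have h := (posSemidef_sSup_spectrum_sub hA).dotProduct_mulVec_zero_iff x
  rw [star_trivial, algebraMap_sub_mulVec, dotProduct_sub, dotProduct_smul, smul_eq_mul,
    sub_eq_zero, sub_eq_zero] at h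
  rw [eq_comm, ← h, eq_comm]

theorem exists_mulVec_eq_sSup_spectrum_smul [Nonempty n] (hA : A.IsHermitian) :
    ∃ x ≠ 0, A *ᵥ x = sSup (spectrum ℝ A) • x := by
  have hne : (spectrum ℝ A).Nonempty := by
    rw [hA.spectrum_real_eq_range_eigenvalues]
    exact Set.range_nonempty _
  have hmem := hne.csSup_mem finite_real_spectrum
  rw [← spectrum_toLin', ← Module.End.hasEigenvalue_iff_mem_spectrum] at hmem
  obtain ⟨x, hx⟩ := hmem.exists_hasEigenvector
  exact ⟨x, hx.2, by simpa using hx.apply_eq_smul⟩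

-- Replacing a top eigenvector by its absolute value does not decrease the Rayleigh quotient.
theorem exists_nonneg_mulVec_eq_sSup_spectrum_smul [Nonempty n] (hA : A.IsHermitian)
    (hA0 : ∀ i j, 0 ≤ A i j) :
    ∃ x, 0 ≤ x ∧ x ≠ 0 ∧ A *ᵥ x = sSup (spectrum ℝ A) • x := by
  obtain ⟨x, hx0, hx⟩ := exists_mulVec_eq_sSup_spectrum_smul hA
  have habs : |x| ⬝ᵥ |x| = x ⬝ᵥ x := by simp [dotProduct]
  refine ⟨|x|, abs_nonneg x, fun h ↦ hx0 (funext fun i ↦ abs_eq_zero.1 (congrFun h i)),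
    (mulVec_eq_sSup_spectrum_smul_iff hA _).2 ?_⟩
  refine (dotProduct_mulVec_le_sSup_spectrum_mul hA _).antisymm ?_
  rw [habs, ← (mulVec_eq_sSup_spectrum_smul_iff hA x).1 hx]
  exact dotProduct_mulVec_le_abs hA0 x

theorem exists_pos_mulVec_eq_sSup_spectrum_smul [Nonempty n] (hA : A.IsHermitian)
    (hirr : A.IsIrreducible) : ∃ x, (∀ i, 0 < x i) ∧ A *ᵥ x = sSup (spectrum ℝ A) • x := by
  obtain ⟨x, hx, hx0, h⟩ := exists_nonneg_mulVec_eq_sSup_spectrum_smul hA hirr.nonneg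
  exact ⟨x, pos_of_isIrreducible_of_mulVec_eq_smul hirr hx hx0 h, h⟩

theorem sSup_spectrum_lt_sSup_spectrum (hA : A.IsHermitian) (hirr : A.IsIrreducible)
    (hB : B.IsHermitian) (hle : ∀ i j, A i j ≤ B i j) (hne : A ≠ B) :
    sSup (spectrum ℝ A) < sSup (spectrum ℝ B) := by
  have : Nonempty n := by
    by_contra! _
    exact hne (Subsingleton.elim A B)
  obtain ⟨x, hx, h⟩ := exists_pos_mulVec_eq_sSup_spectrum_smul hA hirr
  have hx' : 0 ≤ x := fun i ↦ (hx i).le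
  refine lt_of_mul_lt_mul_right ?_ (dotProduct_nonneg_of_nonneg hx' hx')
  calc sSup (spectrum ℝ A) * (x ⬝ᵥ x) = x ⬝ᵥ A *ᵥ x :=
        ((mulVec_eq_sSup_spectrum_smul_iff hA x).1 h).symm
    _ < x ⬝ᵥ B *ᵥ x := dotProduct_mulVec_lt_of_le_of_ne hle hne hx
    _ ≤ sSup (spectrum ℝ B) * (x ⬝ᵥ x) := dotProduct_mulVec_le_sSup_spectrum_mul hB x

end Matrix

section SpectralRadius

variable {V : Type*} {G H : SimpleGraph V}

theorem isIrreducible_adjMatrix [Finite V] [Nontrivial V] [DecidableRel G.Adj]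
    {R : Type*} [Ring R] [LinearOrder R] [IsStrictOrderedRing R] (hG : G.Connected) :
    (G.adjMatrix R).IsIrreducible := by
  classical
  have := Fintype.ofFinite V
  have hnonneg (u v) : 0 ≤ G.adjMatrix R u v := by
    rw [adjMatrix_apply]
    split_ifs <;> simp
  refine (Matrix.isIrreducible_iff_exists_pow_pos hnonneg).2 fun u v ↦ ?_
  obtain ⟨w, hw⟩ := hG.preconnected.exists_adj_of_nontrivial u
  obtain ⟨p⟩ := hG.preconnected w v
  refine ⟨p.length + 1, p.length.succ_pos, ?_⟩
  rw [adjMatrix_pow_apply_eq_card_walk, Nat.cast_pos, Fintype.card_pos_iff]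
  exact ⟨⟨.cons hw p, Walk.length_cons ..⟩⟩

theorem adjMat_eq_adjMatrix [DecidableRel G.Adj] : adjMat G = G.adjMatrix ℝ := by
  ext u v
  simp [adjMat]

theorem adjMat_mono (h : H ≤ G) (u v : V) : adjMat H u v ≤ adjMat G u v := by
  by_cases huv : H.Adj u v
  · simp [adjMat, huv, h huv]
  · simp only [adjMat, Matrix.of_apply, huv, if_false]
    split_ifs <;> simp

theorem adjMat_injective : Function.Injective (adjMat (V := V)) := by
  intro G H h
  ext u v
  have huv : adjMat G u v = adjMat H u v := congrFun₂ h u v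
  by_cases hG : G.Adj u v <;> by_cases hH : H.Adj u v <;> simp [adjMat, hG, hH] at huv ⊢

theorem specRad_lt_of_lt [Fintype V] [DecidableEq V] (hH : H.Connected) (hlt : H < G) :
    specRad H < specRad G := by
  classical
  have hirr : (adjMat H).IsIrreducible := by
    have : Nontrivial V := by
      by_contra hV
      have := not_nontrivial_iff_subsingleton.1 hV
      exact hlt.ne (Subsingleton.elim H G)
    exact adjMat_eq_adjMatrix (G := H) ▸ isIrreducible_adjMatrix hH
  have hherm (K : SimpleGraph V) : (adjMat K).IsHermitian :=
    adjMat_eq_adjMatrix (G := K) ▸ isHermitian_adjMatrix ..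
  exact sSup_spectrum_lt_sSup_spectrum (hherm H) hirr (hherm G) (adjMat_mono hlt.le)
    (adjMat_injective.ne hlt.ne)

end SpectralRadius

section Domination

variable {V : Type*} {G H : SimpleGraph V} {D : Finset V}

theorem IsDomSet.mono (hD : IsDomSet H D) (h : H ≤ G) : IsDomSet G D := fun v hv ↦
  let ⟨u, hu, huv⟩ := hD v hv
  ⟨u, hu, h huv⟩

theorem IsDomSet.domNum_le_card [Fintype V] (hD : IsDomSet G D) : domNum G ≤ D.card :=
  Nat.sInf_le ⟨D, hD, rfl⟩

theorem exists_isDomSet_card_eq_domNum [Fintype V] (G : SimpleGraph V) :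
    ∃ D, IsDomSet G D ∧ D.card = domNum G :=
  Nat.sInf_mem (s := {k | ∃ D, IsDomSet G D ∧ D.card = k})
    ⟨_, Finset.univ, fun v hv ↦ absurd (Finset.mem_univ v) hv, rfl⟩

theorem domNum_antitone [Fintype V] : Antitone (domNum (V := V)) := fun H G h ↦ by
  obtain ⟨D, hD, hcard⟩ := exists_isDomSet_card_eq_domNum H
  exact hcard ▸ (hD.mono h).domNum_le_card

/-- The functional graph of `f`, with an edge between `v` and `f v` for every `v` that is not
fixed by `f`. For idempotent `f` it is a star forest, the fixed points being the centres. -/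
def functionalGraph (f : V → V) : SimpleGraph V :=
  .fromRel fun u v ↦ f u = v

theorem functionalGraph_le_iff {f : V → V} :
    functionalGraph f ≤ G ↔ ∀ v, f v ≠ v → G.Adj (f v) v := by
  refine ⟨fun h v hv ↦ h ⟨hv, .inr rfl⟩, ?_⟩
  rintro h u v ⟨hne, rfl | rfl⟩
  exacts [(h u hne.symm).symm, h v hne]

theorem eq_of_functionalGraph_adj {f : V → V} (hf : ∀ v, f (f v) = f v) {v w : V}
    (hv : f v ≠ v) (h : (functionalGraph f).Adj v w) : w = f v := by
  obtain ⟨-, rfl | rfl⟩ := h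
  exacts [rfl, absurd (hf w) hv]

theorem isAcyclic_functionalGraph {f : V → V} (hf : ∀ v, f (f v) = f v) :
    (functionalGraph f).IsAcyclic := by
  have hbridge (v) (hv : f v ≠ v) : (functionalGraph f).IsBridge s(v, f v) := by
    rw [isBridge_iff_forall_walk_mem_edges]
    intro p
    have hp := p.not_nil_of_ne hv.symm
    have hsnd : p.snd = f v := eq_of_functionalGraph_adj hf hv (p.adj_snd hp)
    simpa only [hsnd] using p.mk_start_snd_mem_edges hp
  rw [isAcyclic_iff_forall_adj_isBridge]
  rintro u v ⟨hne, rfl | rfl⟩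
  · exact hbridge u hne.symm
  · exact Sym2.eq_swap ▸ hbridge v hne

theorem IsDomSet.exists_retraction (hD : IsDomSet G D) :
    ∃ f : V → V, (∀ v, f v ∈ D) ∧ (∀ v ∈ D, f v = v) ∧ ∀ v ∉ D, G.Adj (f v) v := by
  have h (v) : ∃ u ∈ D, (v ∈ D → u = v) ∧ (v ∉ D → G.Adj u v) := by
    by_cases hv : v ∈ D
    · exact ⟨v, hv, fun _ ↦ rfl, absurd hv⟩
    · obtain ⟨u, hu, huv⟩ := hD v hv
      exact ⟨u, hu, fun h ↦ absurd h hv, fun _ ↦ huv⟩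
  choose f hfD hfix hadj using h
  exact ⟨f, hfD, hfix, hadj⟩

theorem IsDomSet.exists_isAcyclic_le (hD : IsDomSet G D) :
    ∃ F ≤ G, F.IsAcyclic ∧ IsDomSet F D := by
  obtain ⟨f, hfD, hfix, hadj⟩ := hD.exists_retraction
  refine ⟨functionalGraph f, functionalGraph_le_iff.2 fun v hv ↦ hadj v (mt (hfix v) hv),
    isAcyclic_functionalGraph fun v ↦ hfix _ (hfD v), fun v hv ↦ ?_⟩
  exact ⟨f v, hfD v, functionalGraph_le_iff.1 le_rfl v (hadj v hv).ne⟩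

theorem exists_isTree_le_domNum_eq [Fintype V] (hG : G.Connected) :
    ∃ T ≤ G, T.IsTree ∧ domNum T = domNum G := by
  obtain ⟨D, hD, hcard⟩ := exists_isDomSet_card_eq_domNum G
  obtain ⟨F, hFG, hF, hFD⟩ := hD.exists_isAcyclic_le
  obtain ⟨T, hFT, hTG, hT⟩ := hG.exists_isTree_le_of_le_of_isAcyclic hFG hF
  exact ⟨T, hTG, hT, (hcard ▸ (hFD.mono hFT).domNum_le_card).antisymm (domNum_antitone hTG)⟩

end Domination

theorem minimizer_is_tree_general {V : Type*} [Fintype V] [DecidableEq V] {G : SimpleGraph V}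
    (hconn : G.Connected)
    (hmin : ∀ T ≤ G, T.IsTree → domNum T = domNum G → specRad G ≤ specRad T) : G.IsTree := by
  obtain ⟨T, hTG, hT, hdom⟩ := exists_isTree_le_domNum_eq hconn
  obtain rfl | hlt := hTG.eq_or_lt
  · exact hT
  · exact absurd (hmin T hTG hT hdom) (specRad_lt_of_lt hT.connected hlt).not_ge

theorem minimizer_is_tree (n γ : ℕ) (hn : 1 ≤ n) (hγ1 : 1 ≤ γ) (hγ2 : γ ≤ n / 2)
    (G : SimpleGraph (Fin n)) (hconn : G.Connected) (hdom : domNum G = γ)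
    (hmin : ∀ H : SimpleGraph (Fin n), H.Connected → domNum H = γ →
      specRad G ≤ specRad H) :
    G.IsTree :=
  minimizer_is_tree_general hconn fun T _ hT hd ↦ hmin T hT.connected (hd.trans hdom)
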